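/- arXiv:2504.08317 — 2 statements merged into one kernel-verified Lean document; each statement's English description precedes it below -/
import Mathlib

section
/- Let D = (0,1)^d and let K : D̄ × D̄ → ℝ be measurable with K(x,·) ∈ L²(D) for every x, such that the Poincaré-type inequality ⟨∫_D K(·,y) φ(y) dy, φ⟩_{L²(D)} ≥ a ‖∫_D K(·,y) φ(y) dy‖²_{L²(D)} holds for every φ ∈ L²(D), for some constant a > 0. Let F : ℝ → ℝ be continuous and bounded with (x − y)(F(x) − F(y)) ≥ −L|x − y|² for all x, y ∈ ℝ and some L ≥ 0, and let g ∈ L²(D). Suppose u, u_n ∈ 𝒞₀(D̄) and η, η_n ∈ 𝒞₀(D̄) satisfy u(x) + ∫_D K(x,y)F(u(y))dy = ∫_D K(x,y)g(y)dy + η(x) and u_n(x) + ∫_D K(x,y)F(u_n(y))dy = ∫_D K(x,y)g(y)dy + η_n(x) for all x ∈ D̄. Then a‖η − η_n‖²_{L²(D)} + (a − L)‖u − u_n‖²_{L²(D)} ≤ ⟨F∘u − F∘u_n + 2a(u − u_n), η − η_n⟩_{L²(D)}. -/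
open MeasureTheory

noncomputable section

/-- The open unit cube `D = (0,1)^d ⊆ ℝ^d`. -/
def openCube (d : ℕ) : Set (Fin d → ℝ) := Set.univ.pi fun _ => Set.Ioo (0 : ℝ) 1

/-- The closed unit cube `D̄ = [0,1]^d ⊆ ℝ^d`. -/
def closedCube (d : ℕ) : Set (Fin d → ℝ) := Set.Icc 0 1

/-- The boundary `∂D = D̄ \ D` of the unit cube. -/
def cubeBoundary (d : ℕ) : Set (Fin d → ℝ) := closedCube d \ openCube d

/-- Lebesgue measure on `D = (0,1)^d` (the reference measure for `L²(D)`). -/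
def cubeMeasure (d : ℕ) : Measure (Fin d → ℝ) := volume.restrict (openCube d)

/-- The Euclidean norm on `ℝ^d`. -/
def euclidNorm {d : ℕ} (v : Fin d → ℝ) : ℝ := Real.sqrt (∑ i, v i ^ 2)

/-!
Put `f = F ∘ u - F ∘ uₙ`, `w = u - uₙ` and `e = η - ηₙ`. Subtracting the two equations gives
`e - w = T f`, where `T` is the integral operator with kernel `K`. The Poincaré-type inequality at
`f` therefore bounds `a ‖e - w‖²` by `⟪e - w, f⟫`, and the one-sided condition on `F` bounds
`-⟪w, f⟫` by `L ‖w‖²`. Expanding `‖e - w‖²` finishes the proof, so the estimate is one about three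
vectors of a real inner product space.
-/

open scoped RealInnerProductSpace

theorem mul_norm_sq_add_mul_norm_sq_le_inner {E : Type*} [SeminormedAddCommGroup E]
    [InnerProductSpace ℝ E] {a L : ℝ} {e w f : E} (hcoc : a * ‖e - w‖ ^ 2 ≤ ⟪e - w, f⟫)
    (hmono : -(L * ‖w‖ ^ 2) ≤ ⟪w, f⟫) :
    a * ‖e‖ ^ 2 + (a - L) * ‖w‖ ^ 2 ≤ ⟪f + (2 * a) • w, e⟫ := by
  rw [norm_sub_sq_real, inner_sub_left] at hcoc
  rw [inner_add_left, real_inner_smul_left, real_inner_comm e f, real_inner_comm e w]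
  linarith

section MeasureSpace

variable {X : Type*} [MeasurableSpace X] {μ : Measure X}

theorem inner_toLp_toLp {f g : X → ℝ} (hf : MemLp f 2 μ) (hg : MemLp g 2 μ) :
    ⟪hf.toLp f, hg.toLp g⟫ = ∫ x, f x * g x ∂μ := by
  rw [L2.inner_def]
  refine integral_congr_ae ?_
  filter_upwards [hf.coeFn_toLp, hg.coeFn_toLp] with x hfx hgx
  rw [hfx, hgx, RCLike.inner_apply', conj_trivial]

theorem norm_toLp_sq {f : X → ℝ} (hf : MemLp f 2 μ) :
    ‖hf.toLp f‖ ^ 2 = ∫ x, f x ^ 2 ∂μ := by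
  simp only [← real_inner_self_eq_norm_sq, inner_toLp_toLp hf hf, sq (f _)]

theorem mul_integral_sq_add_mul_integral_sq_le {a L : ℝ} {e w f : X → ℝ}
    (he : MemLp e 2 μ) (hw : MemLp w 2 μ) (hf : MemLp f 2 μ)
    (hcoc : a * ∫ x, (e x - w x) ^ 2 ∂μ ≤ ∫ x, (e x - w x) * f x ∂μ)
    (hmono : -(L * ∫ x, w x ^ 2 ∂μ) ≤ ∫ x, w x * f x ∂μ) :
    a * ∫ x, e x ^ 2 ∂μ + (a - L) * ∫ x, w x ^ 2 ∂μ
      ≤ ∫ x, (f x + 2 * a * w x) * e x ∂μ := by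
  have hcoc' : a * ‖he.toLp e - hw.toLp w‖ ^ 2 ≤ ⟪he.toLp e - hw.toLp w, hf.toLp f⟫ := by
    rw [← MemLp.toLp_sub he hw, norm_toLp_sq, inner_toLp_toLp]
    exact hcoc
  have hmono' : -(L * ‖hw.toLp w‖ ^ 2) ≤ ⟪hw.toLp w, hf.toLp f⟫ := by
    rwa [norm_toLp_sq, inner_toLp_toLp]
  have hLp := mul_norm_sq_add_mul_norm_sq_le_inner hcoc' hmono'
  rwa [← MemLp.toLp_const_smul, ← MemLp.toLp_add hf (hw.const_smul (2 * a)), inner_toLp_toLp,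
    norm_toLp_sq, norm_toLp_sq] at hLp

theorem neg_mul_integral_sq_sub_le {F : ℝ → ℝ} {L : ℝ}
    (hF : ∀ s t : ℝ, -(L * (s - t) ^ 2) ≤ (s - t) * (F s - F t)) {u v : X → ℝ}
    (hw : MemLp (fun x ↦ u x - v x) 2 μ) (hf : MemLp (fun x ↦ F (u x) - F (v x)) 2 μ) :
    -(L * ∫ x, (u x - v x) ^ 2 ∂μ) ≤ ∫ x, (u x - v x) * (F (u x) - F (v x)) ∂μ := by
  rw [← integral_const_mul, ← integral_neg]
  exact integral_mono (hw.integrable_sq.const_mul L).neg (hw.integrable_mul hf)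
    fun x ↦ hF (u x) (v x)

/-- The integral operator `φ ↦ ∫ K(·, y) φ(y) dμ(y)` with kernel `K`, acting on functions rather
than on classes modulo `μ`-null sets. Where the integral diverges it takes the junk value `0`. -/
def kernelOperator (μ : Measure X) (K : X → X → ℝ) (φ : X → ℝ) (x : X) : ℝ :=
  ∫ y, K x y * φ y ∂μ

theorem kernelOperator_sub {K : X → X → ℝ} {x : X} (hK : MemLp (K x) 2 μ) {φ ψ : X → ℝ}
    (hφ : MemLp φ 2 μ) (hψ : MemLp ψ 2 μ) :
    kernelOperator μ K (φ - ψ) x = kernelOperator μ K φ x - kernelOperator μ K ψ x := by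
  simp only [kernelOperator, Pi.sub_apply, mul_sub]
  exact integral_sub (hK.integrable_mul hφ) (hK.integrable_mul hψ)

/-- Here `h` plays the role of `kernelOperator μ K g`, and `hPoincare` ranges only over those `φ`
whose image is in `L²`, as its integrals may otherwise take the junk value `0`. -/
theorem stmt12_general {K : X → X → ℝ} (hK : ∀ᵐ x ∂μ, MemLp (K x) 2 μ) {a : ℝ}
    (hPoincare : ∀ φ : X → ℝ, MemLp φ 2 μ → MemLp (kernelOperator μ K φ) 2 μ →
      a * ∫ x, kernelOperator μ K φ x ^ 2 ∂μ ≤ ∫ x, kernelOperator μ K φ x * φ x ∂μ)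
    {F : ℝ → ℝ} {L : ℝ} (hF : ∀ s t : ℝ, -(L * (s - t) ^ 2) ≤ (s - t) * (F s - F t))
    {u uₙ η ηₙ h : X → ℝ} (hu : MemLp u 2 μ) (huₙ : MemLp uₙ 2 μ)
    (hFu : MemLp (fun x ↦ F (u x)) 2 μ) (hFuₙ : MemLp (fun x ↦ F (uₙ x)) 2 μ)
    (hη : MemLp η 2 μ) (hηₙ : MemLp ηₙ 2 μ)
    (hequ : ∀ᵐ x ∂μ, u x + kernelOperator μ K (fun y ↦ F (u y)) x = h x + η x)
    (hequₙ : ∀ᵐ x ∂μ, uₙ x + kernelOperator μ K (fun y ↦ F (uₙ y)) x = h x + ηₙ x) :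
    a * ∫ x, (η x - ηₙ x) ^ 2 ∂μ + (a - L) * ∫ x, (u x - uₙ x) ^ 2 ∂μ
      ≤ ∫ x, (F (u x) - F (uₙ x) + 2 * a * (u x - uₙ x)) * (η x - ηₙ x) ∂μ := by
  set f : X → ℝ := (fun x ↦ F (u x)) - fun x ↦ F (uₙ x)
  have hf : MemLp f 2 μ := hFu.sub hFuₙ
  have hTf : kernelOperator μ K f =ᵐ[μ] (η - ηₙ) - (u - uₙ) := by
    filter_upwards [hK, hequ, hequₙ] with x hKx hux huₙx
    simp only [f, kernelOperator_sub hKx hFu hFuₙ, Pi.sub_apply]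
    linarith
  have hTf_memLp : MemLp (kernelOperator μ K f) 2 μ :=
    ((hη.sub hηₙ).sub (hu.sub huₙ)).ae_eq hTf.symm
  have hTf_sq : ∫ x, kernelOperator μ K f x ^ 2 ∂μ
      = ∫ x, ((η x - ηₙ x) - (u x - uₙ x)) ^ 2 ∂μ :=
    integral_congr_ae (hTf.pow_const 2)
  have hTf_mul : ∫ x, kernelOperator μ K f x * f x ∂μ
      = ∫ x, ((η x - ηₙ x) - (u x - uₙ x)) * f x ∂μ :=
    integral_congr_ae (hTf.mul .rfl)
  have hcoc := hPoincare f hf hTf_memLp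
  rw [hTf_sq, hTf_mul] at hcoc
  exact mul_integral_sq_add_mul_integral_sq_le (hη.sub hηₙ) (hu.sub huₙ) hf hcoc
    (neg_mul_integral_sq_sub_le hF (hu.sub huₙ) hf)

end MeasureSpace

theorem memLp_restrict_of_continuousOn_isCompact {X E : Type*} [TopologicalSpace X]
    [MeasurableSpace X] [OpensMeasurableSpace X] {μ : Measure X} [IsFiniteMeasureOnCompacts μ]
    [NormedAddCommGroup E] {f : X → E} {s t : Set X} (hf : ContinuousOn f s) (hs : IsCompact s)
    (ht : MeasurableSet t) (hts : t ⊆ s) (p : ENNReal) : MemLp f p (μ.restrict t) := by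
  obtain ⟨C, hC⟩ := hs.exists_bound_of_continuousOn hf
  have : IsFiniteMeasure (μ.restrict t) :=
    isFiniteMeasure_restrict.2 (measure_ne_top_of_subset hts hs.measure_ne_top)
  exact .of_bound (hf.aestronglyMeasurable_of_subset_isCompact hs ht hts) C
    (ae_restrict_of_forall_mem ht fun x hx ↦ hC x (hts hx))

theorem openCube_subset_closedCube (d : ℕ) : openCube d ⊆ closedCube d := fun _ hx ↦
  ⟨fun i ↦ (hx i (Set.mem_univ i)).1.le, fun i ↦ (hx i (Set.mem_univ i)).2.le⟩

theorem measurableSet_openCube (d : ℕ) : MeasurableSet (openCube d) :=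
  .univ_pi fun _ ↦ measurableSet_Ioo

theorem ae_cubeMeasure_of_forall_mem_closedCube {d : ℕ} {p : (Fin d → ℝ) → Prop}
    (hp : ∀ x ∈ closedCube d, p x) : ∀ᵐ x ∂cubeMeasure d, p x :=
  ae_restrict_of_forall_mem (measurableSet_openCube d) fun x hx ↦
    hp x (openCube_subset_closedCube d hx)

theorem memLp_cubeMeasure_of_continuousOn {d : ℕ} {E : Type*} [NormedAddCommGroup E]
    {f : (Fin d → ℝ) → E} (hf : ContinuousOn f (closedCube d)) {p : ENNReal} :
    MemLp f p (cubeMeasure d) :=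
  memLp_restrict_of_continuousOn_isCompact hf isCompact_Icc (measurableSet_openCube d)
    (openCube_subset_closedCube d) p

/-- Under the Poincaré-type inequality for the kernel `K` and the
one-sided monotonicity condition `(x − y)(F(x) − F(y)) ≥ −L|x − y|²` on the continuous
bounded function `F`, any two solutions `u, uₙ ∈ 𝒞₀(D̄)` of the integral equation with
data `η, ηₙ ∈ 𝒞₀(D̄)` satisfy
`a‖η − ηₙ‖² + (a − L)‖u − uₙ‖² ≤ ⟨F∘u − F∘uₙ + 2a(u − uₙ), η − ηₙ⟩` in `L²(D)`. -/
theorem stmt12 (d : ℕ) (hd : 0 < d)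
    (K : (Fin d → ℝ) → (Fin d → ℝ) → ℝ) (hKmeas : Measurable (Function.uncurry K))
    (hKL2 : ∀ x ∈ closedCube d, MemLp (K x) 2 (cubeMeasure d))
    (a : ℝ) (ha : 0 < a)
    (hPoincare : ∀ φ : (Fin d → ℝ) → ℝ, MemLp φ 2 (cubeMeasure d) →
      a * ∫ x, (∫ y, K x y * φ y ∂(cubeMeasure d)) ^ 2 ∂(cubeMeasure d)
        ≤ ∫ x, (∫ y, K x y * φ y ∂(cubeMeasure d)) * φ x ∂(cubeMeasure d))
    (F : ℝ → ℝ) (hFcont : Continuous F) (MF : ℝ) (hFbd : ∀ t, |F t| ≤ MF)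
    (L : ℝ) (hL : 0 ≤ L)
    (hFmono : ∀ s t : ℝ, -(L * (s - t) ^ 2) ≤ (s - t) * (F s - F t))
    (g : (Fin d → ℝ) → ℝ) (hg : MemLp g 2 (cubeMeasure d))
    (u uₙ η ηₙ : (Fin d → ℝ) → ℝ)
    (hu : ContinuousOn u (closedCube d)) (hu0 : ∀ x ∈ cubeBoundary d, u x = 0)
    (huₙ : ContinuousOn uₙ (closedCube d)) (huₙ0 : ∀ x ∈ cubeBoundary d, uₙ x = 0)
    (hη : ContinuousOn η (closedCube d)) (hη0 : ∀ x ∈ cubeBoundary d, η x = 0)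
    (hηₙ : ContinuousOn ηₙ (closedCube d)) (hηₙ0 : ∀ x ∈ cubeBoundary d, ηₙ x = 0)
    (hequ : ∀ x ∈ closedCube d,
      u x + ∫ y, K x y * F (u y) ∂(cubeMeasure d)
        = (∫ y, K x y * g y ∂(cubeMeasure d)) + η x)
    (hequₙ : ∀ x ∈ closedCube d,
      uₙ x + ∫ y, K x y * F (uₙ y) ∂(cubeMeasure d)
        = (∫ y, K x y * g y ∂(cubeMeasure d)) + ηₙ x) :
    a * (∫ y, (η y - ηₙ y) ^ 2 ∂(cubeMeasure d)) +
        (a - L) * (∫ y, (u y - uₙ y) ^ 2 ∂(cubeMeasure d))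
      ≤ ∫ y, (F (u y) - F (uₙ y) + 2 * a * (u y - uₙ y)) * (η y - ηₙ y)
          ∂(cubeMeasure d) := by
  exact stmt12_general (ae_cubeMeasure_of_forall_mem_closedCube hKL2)
    (fun φ hφ _ ↦ hPoincare φ hφ) hFmono (memLp_cubeMeasure_of_continuousOn hu)
    (memLp_cubeMeasure_of_continuousOn huₙ)
    (memLp_cubeMeasure_of_continuousOn (hFcont.comp_continuousOn hu))
    (memLp_cubeMeasure_of_continuousOn (hFcont.comp_continuousOn huₙ))
    (memLp_cubeMeasure_of_continuousOn hη) (memLp_cubeMeasure_of_continuousOn hηₙ)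
    (ae_cubeMeasure_of_forall_mem_closedCube hequ) (ae_cubeMeasure_of_forall_mem_closedCube hequₙ)
end
end

section
/- Let D = (0,1)^d and let K : D̄ × D̄ → ℝ be measurable with K(x,·) ∈ L²(D) for every x, satisfying ‖K(x,·) − K(z,·)‖_{L²(D)} ≤ C_K |x − z|^β for all x, z ∈ D̄ for some constants C_K, β > 0, K(x,y) = 0 for almost every y ∈ D whenever x ∈ ∂D, and Λ := sup_{x∈D̄} ‖K(x,·)‖_{L²(D)} < ∞. Let F : ℝ → ℝ be L-Lipschitz with ΛL < 1, and let g ∈ L²(D). Then for every η ∈ 𝒞₀(D̄) there exists a unique u ∈ 𝒞₀(D̄) such that u(x) = −∫_D K(x,y) F(u(y)) dy + ∫_D K(x,y) g(y) dy + η(x) for every x ∈ D̄. -/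
open MeasureTheory

noncomputable section

/-!
The equation is a fixed point problem for `u ↦ -∫ K(·, y) F(u(y)) dy + f` with
`f = ∫ K(·, y) g(y) dy + η`. Continuity of `x ↦ K(x, ·)` into `L²(D)` makes `f` and the image of
every continuous function continuous, and the image inherits the boundary values `0`. Since `D` has
measure one, the `L¹` norms of `K(x, ·)` are at most `Λ` as well, so pairing `K(x, ·)` with the
bounded function `F ∘ u - F ∘ v` shows that the map contracts the uniform norm by the factor `ΛL`.
-/

open scoped ENNReal NNReal

section FixedPoint

variable {X M : Type*} [TopologicalSpace X] {s : Set X}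

theorem continuousOn_extend_val [TopologicalSpace M] (v : C(s, M)) (w : X → M) :
    ContinuousOn (Function.extend Subtype.val v w) s := by
  rw [continuousOn_iff_continuous_domRestrict, Set.domRestrict_eq,
    Function.extend_comp Subtype.val_injective]
  exact v.continuous

theorem exists_unique_eqOn_fixedPoint_of_contraction [MetricSpace M] [CompleteSpace M] [Nonempty M]
    (hs : IsCompact s) {c : ℝ≥0} (hc : c < 1) {Φ : (X → M) → X → M}
    (hΦ : ∀ u, ContinuousOn u s → ContinuousOn (Φ u) s)
    (hΦc : ∀ u v, ContinuousOn u s → ContinuousOn v s → ∀ B : ℝ≥0∞,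
      (∀ y ∈ s, edist (u y) (v y) ≤ B) → ∀ x ∈ s, edist (Φ u x) (Φ v x) ≤ c * B) :
    ∃ u, ContinuousOn u s ∧ Set.EqOn u (Φ u) s ∧
      ∀ u', ContinuousOn u' s → Set.EqOn u' (Φ u') s → Set.EqOn u' u s := by
  have : CompactSpace s := isCompact_iff_compactSpace.1 hs
  have : Nonempty C(s, M) := ⟨.const s (Classical.arbitrary M)⟩
  let ext (v : C(s, M)) : X → M := Function.extend Subtype.val v fun _ => Classical.arbitrary M
  have ext_apply (v : C(s, M)) (x : s) : ext v x = v x :=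
    Subtype.val_injective.extend_apply _ _ _
  have ext_cont (v : C(s, M)) : ContinuousOn (ext v) s := continuousOn_extend_val v _
  let T (v : C(s, M)) : C(s, M) := ⟨s.domRestrict (Φ (ext v)), (hΦ _ (ext_cont v)).domRestrict⟩
  have hT : ContractingWith c T := by
    refine ⟨hc, fun v w => ?_⟩
    rw [ContinuousMap.edist_eq_iSup (f := T v)]
    refine iSup_le fun x => hΦc _ _ (ext_cont v) (ext_cont w) _ (fun y hy => ?_) x x.2
    rw [ext_apply v ⟨y, hy⟩, ext_apply w ⟨y, hy⟩, ContinuousMap.edist_eq_iSup]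
    exact le_iSup (fun y => edist (v y) (w y)) _
  refine ⟨ext hT.fixedPoint, ext_cont _, fun x hx => ?_, fun u' hu' hfix x hx => ?_⟩
  · rw [ext_apply _ ⟨x, hx⟩]
    exact (DFunLike.congr_fun hT.fixedPoint_isFixedPt ⟨x, hx⟩).symm
  · let v : C(s, M) := ⟨s.domRestrict u', hu'.domRestrict⟩
    -- The contraction estimate with `B = 0` says that `Φ u` on `s` only depends on `u` on `s`.
    have hv : Function.IsFixedPt T v := by
      ext y
      have hle : edist (Φ (ext v) y) (Φ u' y) ≤ c * 0 :=
        hΦc _ _ (ext_cont v) hu' 0 (fun z hz => by simp [ext_apply v ⟨z, hz⟩, v]) y y.2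
      rw [mul_zero, nonpos_iff_eq_zero, edist_eq_zero, ← hfix y.2] at hle
      exact hle
    rw [ext_apply _ ⟨x, hx⟩, ← hT.fixedPoint_unique hv]
    rfl

end FixedPoint

section IntegralOperator

variable {X Y 𝕜 E : Type*} [MeasurableSpace Y] {μ : Measure Y} [NormedField 𝕜]
  [NormedAddCommGroup E] [NormedSpace 𝕜 E] {p q : ℝ≥0∞}

theorem integrable_smul_of_holderConjugate [p.HolderConjugate q] {k : Y → 𝕜} {h : Y → E}
    (hk : MemLp k p μ) (hh : MemLp h q μ) : Integrable (fun y => k y • h y) μ :=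
  memLp_one_iff_integrable.1 (hh.smul hk)

variable [NormedSpace ℝ E]

theorem enorm_integral_smul_le_eLpNorm_mul_eLpNorm [p.HolderConjugate q] {k : Y → 𝕜} {h : Y → E}
    (hk : AEStronglyMeasurable k μ) (hh : AEStronglyMeasurable h μ) :
    ‖∫ y, k y • h y ∂μ‖ₑ ≤ eLpNorm k p μ * eLpNorm h q μ :=
  calc ‖∫ y, k y • h y ∂μ‖ₑ
      ≤ eLpNorm (k • h) 1 μ := by
        rw [eLpNorm_one_eq_lintegral_enorm]
        exact enorm_integral_le_lintegral_enorm _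
    _ ≤ eLpNorm k p μ * eLpNorm h q μ := eLpNorm_smul_le_mul_eLpNorm hh hk

theorem integral_smul_eq_zero_of_ae {k : Y → 𝕜} (hk : k =ᵐ[μ] 0) (h : Y → E) :
    ∫ y, k y • h y ∂μ = 0 :=
  integral_eq_zero_of_ae (hk.mono fun y hy => by simp [hy])

variable [TopologicalSpace X] {k : X → Y → 𝕜} {s : Set X}

/-- The kernel `k` defines a continuous map `x ↦ k x` from `s` to `L^p(μ)`. This is phrased through
`eLpNorm` rather than `Lp` so that it applies to pointwise defined kernels. -/
structure LpContinuousOn (k : X → Y → 𝕜) (p : ℝ≥0∞) (μ : Measure Y) (s : Set X) : Prop where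
  memLp : ∀ x ∈ s, MemLp (k x) p μ
  tendsto_eLpNorm_sub : ∀ z ∈ s,
    Filter.Tendsto (fun x => eLpNorm (k x - k z) p μ) (nhdsWithin z s) (nhds 0)

namespace LpContinuousOn

theorem of_eLpNorm_sub_le (hk : ∀ x ∈ s, MemLp (k x) p μ) {ω : X → X → ℝ≥0∞}
    (hkω : ∀ x ∈ s, ∀ z ∈ s, eLpNorm (k x - k z) p μ ≤ ω x z)
    (hω : ∀ z ∈ s, Filter.Tendsto (ω · z) (nhdsWithin z s) (nhds 0)) :
    LpContinuousOn k p μ s where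
  memLp := hk
  tendsto_eLpNorm_sub z hz := by
    refine tendsto_of_tendsto_of_tendsto_of_le_of_le' tendsto_const_nhds (hω z hz)
      (.of_forall fun _ => zero_le) ?_
    filter_upwards [self_mem_nhdsWithin] with x hx using hkω x hx z hz

theorem mono_exponent [IsFiniteMeasure μ] (hk : LpContinuousOn k p μ s) (hqp : q ≤ p) :
    LpContinuousOn k q μ s := by
  have hmem : ∀ x ∈ s, MemLp (k x) q μ := fun x hx => (hk.memLp x hx).mono_exponent hqp
  rcases eq_or_ne q 0 with rfl | hq
  · exact ⟨hmem, fun z _ => by simpa only [eLpNorm_exponent_zero] using tendsto_const_nhds⟩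
  refine of_eLpNorm_sub_le hmem (fun x hx z hz => eLpNorm_le_eLpNorm_mul_rpow_measure_univ hqp
    ((hk.memLp x hx).sub (hk.memLp z hz)).aestronglyMeasurable) fun z hz => ?_
  have hexp : 0 ≤ 1 / q.toReal - 1 / p.toReal := by
    simp only [one_div, ← ENNReal.toReal_inv]
    exact sub_nonneg.2 (ENNReal.toReal_mono (ENNReal.inv_ne_top.2 hq) (ENNReal.inv_le_inv.2 hqp))
  simpa only [zero_mul] using ENNReal.Tendsto.mul_const (hk.tendsto_eLpNorm_sub z hz)
    (.inr (ENNReal.rpow_ne_top_of_nonneg hexp (measure_ne_top μ _)))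

theorem continuousOn_integral_smul [p.HolderConjugate q] (hk : LpContinuousOn k p μ s)
    {h : Y → E} (hh : MemLp h q μ) : ContinuousOn (fun x => ∫ y, k x y • h y ∂μ) s := by
  intro z hz
  have hle : ∀ x ∈ s, edist (∫ y, k x y • h y ∂μ) (∫ y, k z y • h y ∂μ) ≤
      eLpNorm (k x - k z) p μ * eLpNorm h q μ := by
    intro x hx
    rw [edist_eq_enorm_sub, ← integral_sub (integrable_smul_of_holderConjugate (hk.memLp x hx) hh)
      (integrable_smul_of_holderConjugate (hk.memLp z hz) hh)]
    simp_rw [← sub_smul]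
    exact enorm_integral_smul_le_eLpNorm_mul_eLpNorm
      ((hk.memLp x hx).sub (hk.memLp z hz)).aestronglyMeasurable hh.aestronglyMeasurable
  have hlim : Filter.Tendsto (fun x => eLpNorm (k x - k z) p μ * eLpNorm h q μ)
      (nhdsWithin z s) (nhds 0) := by
    simpa only [zero_mul] using
      ENNReal.Tendsto.mul_const (hk.tendsto_eLpNorm_sub z hz) (.inr hh.eLpNorm_ne_top)
  refine tendsto_iff_edist_tendsto_0.2 (tendsto_of_tendsto_of_tendsto_of_le_of_le'
    tendsto_const_nhds hlim (.of_forall fun _ => zero_le) ?_)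
  filter_upwards [self_mem_nhdsWithin] with x hx using hle x hx

end LpContinuousOn

end IntegralOperator

section Hammerstein

variable {X 𝕜 M E : Type*} [TopologicalSpace X] [T2Space X] [MeasurableSpace X]
  [OpensMeasurableSpace X] {μ : Measure X} {s : Set X} [NormedField 𝕜] [NormedAddCommGroup E]
  [SecondCountableTopologyEither X E]

theorem memLp_top_of_continuousOn_isCompact (hs : IsCompact s) (hμ : ∀ᵐ y ∂μ, y ∈ s) {f : X → E}
    (hf : ContinuousOn f s) : MemLp f ∞ μ := by
  obtain ⟨C, hC⟩ := hs.exists_bound_of_continuousOn hf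
  have hfm : AEStronglyMeasurable f (μ.restrict s) := hf.aestronglyMeasurable hs.measurableSet
  rw [Measure.restrict_eq_self_of_ae_mem hμ] at hfm
  exact memLp_top_of_bound hfm C (hμ.mono hC)

variable [NormedSpace 𝕜 E] [NormedSpace ℝ E] {k : X → X → 𝕜}

/-- The Hammerstein operator `u ↦ ∫ k(·, y) F(u(y)) dμ(y)` with kernel `k` and nonlinearity `F`; the
equation is a fixed point problem for minus this operator plus a source term. -/
def hammersteinOperator (μ : Measure X) (k : X → X → 𝕜) (F : M → E) (u : X → M) (x : X) : E :=
  ∫ y, k x y • F (u y) ∂μ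

theorem continuousOn_hammersteinOperator [TopologicalSpace M] (hs : IsCompact s)
    (hμ : ∀ᵐ y ∂μ, y ∈ s) (hk : LpContinuousOn k 1 μ s) {F : M → E} (hF : Continuous F)
    {u : X → M} (hu : ContinuousOn u s) : ContinuousOn (hammersteinOperator μ k F u) s :=
  hk.continuousOn_integral_smul
    (memLp_top_of_continuousOn_isCompact hs hμ (hF.comp_continuousOn hu))

theorem edist_hammersteinOperator_le [PseudoEMetricSpace M] (hs : IsCompact s)
    (hμ : ∀ᵐ y ∂μ, y ∈ s) {x : X} (hk : MemLp (k x) 1 μ) {F : M → E} {L : ℝ≥0}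
    (hF : LipschitzWith L F) {u v : X → M} (hu : ContinuousOn u s) (hv : ContinuousOn v s)
    {B : ℝ≥0∞} (huv : ∀ y ∈ s, edist (u y) (v y) ≤ B) :
    edist (hammersteinOperator μ k F u x) (hammersteinOperator μ k F v x) ≤
      eLpNorm (k x) 1 μ * (L * B) := by
  have hFu : MemLp (fun y => F (u y)) ∞ μ :=
    memLp_top_of_continuousOn_isCompact hs hμ (hF.continuous.comp_continuousOn hu)
  have hFv : MemLp (fun y => F (v y)) ∞ μ :=
    memLp_top_of_continuousOn_isCompact hs hμ (hF.continuous.comp_continuousOn hv)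
  have hsup : eLpNorm (fun y => F (u y) - F (v y)) ∞ μ ≤ L * B := by
    rw [eLpNorm_exponent_top]
    refine eLpNormEssSup_le_of_ae_enorm_bound (hμ.mono fun y hy => ?_)
    rw [← edist_eq_enorm_sub]
    exact (hF _ _).trans (mul_le_mul_right (huv y hy) _)
  calc edist (hammersteinOperator μ k F u x) (hammersteinOperator μ k F v x)
      = ‖∫ y, k x y • (F (u y) - F (v y)) ∂μ‖ₑ := by
        simp_rw [smul_sub]
        rw [integral_sub (integrable_smul_of_holderConjugate hk hFu)
          (integrable_smul_of_holderConjugate hk hFv), ← edist_eq_enorm_sub]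
        rfl
    _ ≤ eLpNorm (k x) 1 μ * eLpNorm (fun y => F (u y) - F (v y)) ∞ μ :=
        enorm_integral_smul_le_eLpNorm_mul_eLpNorm hk.aestronglyMeasurable
          (hFu.sub hFv).aestronglyMeasurable
    _ ≤ eLpNorm (k x) 1 μ * (L * B) := mul_le_mul_right hsup _

theorem stmt15_general [CompleteSpace E] (hs : IsCompact s) (hμ : ∀ᵐ y ∂μ, y ∈ s)
    {b : Set X} (hbs : b ⊆ s) (hk : LpContinuousOn k 1 μ s) (hkb : ∀ x ∈ b, k x =ᵐ[μ] 0)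
    {Λ L : ℝ≥0} (hΛ : ∀ x ∈ s, eLpNorm (k x) 1 μ ≤ Λ) {F : E → E} (hF : LipschitzWith L F)
    (hΛL : Λ * L < 1) {f : X → E} (hf : ContinuousOn f s) (hfb : ∀ x ∈ b, f x = 0) :
    ∃ u : X → E, (ContinuousOn u s ∧ ∀ x ∈ b, u x = 0) ∧
      (∀ x ∈ s, u x = -(∫ y, k x y • F (u y) ∂μ) + f x) ∧
      ∀ u' : X → E, ContinuousOn u' s →
        (∀ x ∈ s, u' x = -(∫ y, k x y • F (u' y) ∂μ) + f x) → Set.EqOn u' u s := by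
  obtain ⟨u, hu, hfix, huniq⟩ :=
    exists_unique_eqOn_fixedPoint_of_contraction hs hΛL
      (Φ := fun u x => -hammersteinOperator μ k F u x + f x)
      (fun u hu => (continuousOn_hammersteinOperator hs hμ hk hF.continuous hu).neg.add hf)
      (fun u v hu hv B huv x hx => by
        rw [edist_add_right, edist_neg_neg, ENNReal.coe_mul, mul_assoc]
        exact (edist_hammersteinOperator_le hs hμ (hk.memLp x hx) hF hu hv huv).trans
          (mul_le_mul_left (hΛ x hx) _))
  refine ⟨u, ⟨hu, fun x hx => ?_⟩, hfix, huniq⟩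
  calc u x = -(∫ y, k x y • F (u y) ∂μ) + f x := hfix (hbs hx)
    _ = 0 := by rw [integral_smul_eq_zero_of_ae (hkb x hx), hfb x hx, neg_zero, add_zero]

end Hammerstein

section Cube

variable {d : ℕ}

instance : IsProbabilityMeasure (cubeMeasure d) :=
  ⟨by simp [cubeMeasure, openCube, Real.volume_pi_Ioo]⟩

theorem ae_mem_closedCube : ∀ᵐ y ∂cubeMeasure d, y ∈ closedCube d := by
  filter_upwards [ae_restrict_mem (MeasurableSet.univ_pi fun _ => measurableSet_Ioo)] with y hy
  exact ⟨fun i => (hy i trivial).1.le, fun i => (hy i trivial).2.le⟩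

theorem tendsto_ofReal_mul_euclidNorm_sub_rpow (C : ℝ) {β : ℝ} (hβ : 0 < β) (z : Fin d → ℝ) :
    Filter.Tendsto (fun x => ENNReal.ofReal (C * euclidNorm (x - z) ^ β)) (nhds z) (nhds 0) := by
  have hcont : Continuous fun x : Fin d → ℝ => ENNReal.ofReal (C * euclidNorm (x - z) ^ β) := by
    have hnorm : Continuous fun x : Fin d → ℝ => euclidNorm (x - z) := by
      unfold euclidNorm
      fun_prop
    exact ENNReal.continuous_ofReal.comp ((hnorm.rpow_const fun _ => .inr hβ.le).const_mul C)
  simpa [euclidNorm, Real.zero_rpow hβ.ne'] using hcont.tendsto z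

theorem lpContinuousOn_of_euclidNorm_holder {Y 𝕜 : Type*} [MeasurableSpace Y] {μ : Measure Y}
    [NormedField 𝕜] {p : ℝ≥0∞} {s : Set (Fin d → ℝ)} {k : (Fin d → ℝ) → Y → 𝕜}
    (hk : ∀ x ∈ s, MemLp (k x) p μ) {C β : ℝ} (hβ : 0 < β)
    (hkβ : ∀ x ∈ s, ∀ z ∈ s,
      eLpNorm (k x - k z) p μ ≤ ENNReal.ofReal (C * euclidNorm (x - z) ^ β)) :
    LpContinuousOn k p μ s :=
  .of_eLpNorm_sub_le hk hkβ fun z _ =>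
    (tendsto_ofReal_mul_euclidNorm_sub_rpow C hβ z).mono_left nhdsWithin_le_nhds

end Cube

/-- If `K` is `L²`-Hölder in its first variable, vanishes (a.e.) on the
boundary, has `Λ = sup_x ‖K(x,·)‖_{L²} < ∞`, and `F` is `L`-Lipschitz with `ΛL < 1`,
then for every `η ∈ 𝒞₀(D̄)` and `g ∈ L²(D)` there is a unique `u ∈ 𝒞₀(D̄)` with
`u(x) = −∫_D K(x,y)F(u(y))dy + ∫_D K(x,y)g(y)dy + η(x)` on `D̄` (uniqueness meaning
any two such solutions agree on `D̄`). -/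
theorem stmt15 (d : ℕ) (hd : 0 < d)
    (K : (Fin d → ℝ) → (Fin d → ℝ) → ℝ) (hKmeas : Measurable (Function.uncurry K))
    (hKL2 : ∀ x ∈ closedCube d, MemLp (K x) 2 (cubeMeasure d))
    (CK β : ℝ) (hCK : 0 < CK) (hβ : 0 < β)
    (hKHolder : ∀ x ∈ closedCube d, ∀ z ∈ closedCube d,
      eLpNorm (fun y => K x y - K z y) 2 (cubeMeasure d)
        ≤ ENNReal.ofReal (CK * euclidNorm (x - z) ^ β))
    (hKbdry : ∀ x ∈ cubeBoundary d, ∀ᵐ y ∂(cubeMeasure d), K x y = 0)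
    (Λ : ℝ) (hΛ : ∀ x ∈ closedCube d, eLpNorm (K x) 2 (cubeMeasure d) ≤ ENNReal.ofReal Λ)
    (L : ℝ) (hL : 0 ≤ L) (F : ℝ → ℝ) (hFLip : ∀ s t : ℝ, |F s - F t| ≤ L * |s - t|)
    (hΛL : Λ * L < 1)
    (g : (Fin d → ℝ) → ℝ) (hg : MemLp g 2 (cubeMeasure d))
    (η : (Fin d → ℝ) → ℝ) (hη : ContinuousOn η (closedCube d))
    (hη0 : ∀ x ∈ cubeBoundary d, η x = 0) :
    ∃ u : (Fin d → ℝ) → ℝ,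
      (ContinuousOn u (closedCube d) ∧ ∀ x ∈ cubeBoundary d, u x = 0) ∧
      (∀ x ∈ closedCube d,
        u x = -(∫ y, K x y * F (u y) ∂(cubeMeasure d)) +
            (∫ y, K x y * g y ∂(cubeMeasure d)) + η x) ∧
      ∀ u' : (Fin d → ℝ) → ℝ,
        (ContinuousOn u' (closedCube d) ∧ ∀ x ∈ cubeBoundary d, u' x = 0) →
        (∀ x ∈ closedCube d,
          u' x = -(∫ y, K x y * F (u' y) ∂(cubeMeasure d)) +
              (∫ y, K x y * g y ∂(cubeMeasure d)) + η x) →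
        Set.EqOn u' u (closedCube d) := by
  have hK : LpContinuousOn K 2 (cubeMeasure d) (closedCube d) :=
    lpContinuousOn_of_euclidNorm_holder hKL2 hβ hKHolder
  have hΛ₁ : ∀ x ∈ closedCube d, eLpNorm (K x) 1 (cubeMeasure d) ≤ Λ.toNNReal := fun x hx =>
    (eLpNorm_le_eLpNorm_of_exponent_le one_le_two (hKL2 x hx).aestronglyMeasurable).trans (hΛ x hx)
  simp only [add_assoc]
  obtain ⟨u, hu, hfix, huniq⟩ := stmt15_general isCompact_Icc ae_mem_closedCube Set.sdiff_subset
    (hK.mono_exponent one_le_two) hKbdry hΛ₁ (LipschitzWith.of_dist_le' hFLip)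
    (by rwa [mul_comm, ← Real.toNNReal_mul hL, Real.toNNReal_lt_one, mul_comm])
    ((hK.continuousOn_integral_smul hg).add hη) fun x hx => by
      rw [Pi.add_apply, integral_smul_eq_zero_of_ae (hKbdry x hx), hη0 x hx, add_zero]
  exact ⟨u, hu, hfix, fun u' hu' => huniq u' hu'.1⟩
end
end
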